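/- Let α : ℝ × ℝ → ℝ³ be a smooth solution of the vortex filament equation α_t = α_s ×_L α_ss in Minkowski 3-space such that each curve α(·,t) is a unit-speed spacelike curve with timelike binormal, with smooth Frenet frame (T, N, B) satisfying ⟨T,T⟩_L = ⟨N,N⟩_L = 1, ⟨B,B⟩_L = −1, α_t = κB, and Frenet equations Tₛ = κN, Nₛ = −κT + τB, Bₛ = τN with κ > 0. Then there exist smooth maps E₁, E₂ : ℝ × ℝ → ℝ³ and smooth functions k₁, k₂ : ℝ × ℝ → ℝ such that (T, E₁, E₂) is pairwise ⟨·,·⟩_L-orthogonal with ⟨E₁,E₁⟩_L = 1, ⟨E₂,E₂⟩_L = −1, and Tₛ = k₁E₁ + k₂E₂, (E₁)ₛ = −k₁T, (E₂)ₛ = k₂T, and T_t = (k₂)ₛE₁ + (k₁)ₛE₂, (E₁)_t = −(k₂)ₛT − ½(k₁² − k₂²)E₂, (E₂)_t = (k₁)ₛT − ½(k₁² − k₂²)E₁. -/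

import Mathlib

noncomputable section

open Real

/-- Minkowski 3-space: ℝ³ as a vector type. -/
abbrev V3 : Type := Fin 3 → ℝ

/-- Lorentzian inner product ⟨x,y⟩_L = −x₁y₁ + x₂y₂ + x₃y₃ on ℝ³. -/
def lor (x y : V3) : ℝ := -(x 0 * y 0) + x 1 * y 1 + x 2 * y 2

/-- Lorentzian cross product x ×_L y = (x₃y₂ − x₂y₃, x₃y₁ − x₁y₃, x₁y₂ − x₂y₁). -/
def lcross (x y : V3) : V3 :=
  ![x 2 * y 1 - x 1 * y 2, x 2 * y 0 - x 0 * y 2, x 0 * y 1 - x 1 * y 0]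

/-- Partial derivative with respect to the first variable `s`. -/
def pds {E : Type*} [NormedAddCommGroup E] [NormedSpace ℝ E]
    (f : ℝ × ℝ → E) (p : ℝ × ℝ) : E := deriv (fun s => f (s, p.2)) p.1

/-- Partial derivative with respect to the second variable `t`. -/
def pdt {E : Type*} [NormedAddCommGroup E] [NormedSpace ℝ E]
    (f : ℝ × ℝ → E) (p : ℝ × ℝ) : E := deriv (fun t => f (p.1, t)) p.2

section Helpers

variable {E : Type*} [NormedAddCommGroup E] [NormedSpace ℝ E]

lemma hasS {f : ℝ × ℝ → E} (hf : ContDiff ℝ (⊤ : ℕ∞) f) (p : ℝ × ℝ) :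
    HasDerivAt (fun s => f (s, p.2)) (fderiv ℝ f p (1, 0)) p.1 := by
  have h1 : HasFDerivAt f (fderiv ℝ f p) (p.1, p.2) :=
    (hf.differentiable (by simp) p).hasFDerivAt
  have h2 : HasDerivAt (fun s : ℝ => (s, p.2)) ((1 : ℝ), (0 : ℝ)) p.1 :=
    (hasDerivAt_id p.1).prodMk (hasDerivAt_const p.1 p.2)
  exact h1.comp_hasDerivAt p.1 h2

lemma hasT {f : ℝ × ℝ → E} (hf : ContDiff ℝ (⊤ : ℕ∞) f) (p : ℝ × ℝ) :
    HasDerivAt (fun t => f (p.1, t)) (fderiv ℝ f p (0, 1)) p.2 := by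
  have h1 : HasFDerivAt f (fderiv ℝ f p) (p.1, p.2) :=
    (hf.differentiable (by simp) p).hasFDerivAt
  have h2 : HasDerivAt (fun t : ℝ => (p.1, t)) ((0 : ℝ), (1 : ℝ)) p.2 :=
    (hasDerivAt_const p.2 p.1).prodMk (hasDerivAt_id p.2)
  exact h1.comp_hasDerivAt p.2 h2

lemma pds_eq {f : ℝ × ℝ → E} (hf : ContDiff ℝ (⊤ : ℕ∞) f) (p : ℝ × ℝ) :
    pds f p = fderiv ℝ f p (1, 0) := (hasS hf p).deriv

lemma pdt_eq {f : ℝ × ℝ → E} (hf : ContDiff ℝ (⊤ : ℕ∞) f) (p : ℝ × ℝ) :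
    pdt f p = fderiv ℝ f p (0, 1) := (hasT hf p).deriv

lemma hasS' {f : ℝ × ℝ → E} (hf : ContDiff ℝ (⊤ : ℕ∞) f) (p : ℝ × ℝ) :
    HasDerivAt (fun s => f (s, p.2)) (pds f p) p.1 := by
  rw [pds_eq hf]; exact hasS hf p

lemma hasT' {f : ℝ × ℝ → E} (hf : ContDiff ℝ (⊤ : ℕ∞) f) (p : ℝ × ℝ) :
    HasDerivAt (fun t => f (p.1, t)) (pdt f p) p.2 := by
  rw [pdt_eq hf]; exact hasT hf p

lemma smooth_fderiv {f : ℝ × ℝ → E} (hf : ContDiff ℝ (⊤ : ℕ∞) f) :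
    ContDiff ℝ (⊤ : ℕ∞) (fderiv ℝ f) := (contDiff_infty_iff_fderiv.1 hf).2

lemma smooth_pds {f : ℝ × ℝ → E} (hf : ContDiff ℝ (⊤ : ℕ∞) f) :
    ContDiff ℝ (⊤ : ℕ∞) (pds f) := by
  have : pds f = fun p => fderiv ℝ f p (1, 0) := funext (pds_eq hf)
  rw [this]
  exact (smooth_fderiv hf).clm_apply contDiff_const

lemma smooth_pdt {f : ℝ × ℝ → E} (hf : ContDiff ℝ (⊤ : ℕ∞) f) :
    ContDiff ℝ (⊤ : ℕ∞) (pdt f) := by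
  have : pdt f = fun p => fderiv ℝ f p (0, 1) := funext (pdt_eq hf)
  rw [this]
  exact (smooth_fderiv hf).clm_apply contDiff_const

lemma pds_pdt_comm {f : ℝ × ℝ → E} (hf : ContDiff ℝ (⊤ : ℕ∞) f) (p : ℝ × ℝ) :
    pds (pdt f) p = pdt (pds f) p := by
  rw [pds_eq (smooth_pdt hf), pdt_eq (smooth_pds hf)]
  have h1 : pds f = fun p => fderiv ℝ f p (1, 0) := funext (pds_eq hf)
  have h2 : pdt f = fun p => fderiv ℝ f p (0, 1) := funext (pdt_eq hf)
  have hd : HasFDerivAt (fderiv ℝ f) (fderiv ℝ (fderiv ℝ f) p) p :=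
    ((smooth_fderiv hf).differentiable (by simp) p).hasFDerivAt
  have e1 := (hd.clm_apply (hasFDerivAt_const ((1 : ℝ), (0 : ℝ)) p)).fderiv
  have e2 := (hd.clm_apply (hasFDerivAt_const ((0 : ℝ), (1 : ℝ)) p)).fderiv
  rw [h1, h2, e1, e2]
  have hs : IsSymmSndFDerivAt ℝ f p := hf.contDiffAt.isSymmSndFDerivAt (by
    simp only [minSmoothness_of_isRCLikeNormedField]; exact WithTop.coe_le_coe.2 le_top)
  simpa using hs.eq (1, 0) (0, 1)

lemma exists_potential {a b : ℝ × ℝ → ℝ} (ha : ContDiff ℝ (⊤ : ℕ∞) a)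
    (hb : ContDiff ℝ (⊤ : ℕ∞) b) (hab : ∀ p, pdt a p = pds b p) :
    ∃ θ : ℝ × ℝ → ℝ, ContDiff ℝ (⊤ : ℕ∞) θ ∧ (∀ p, pds θ p = a p) ∧ ∀ p, pdt θ p = b p := by
  let w : ℝ × ℝ → (ℝ × ℝ →L[ℝ] ℝ) := fun p =>
    a p • ContinuousLinearMap.fst ℝ ℝ ℝ + b p • ContinuousLinearMap.snd ℝ ℝ ℝ
  have hw : ContDiff ℝ (⊤ : ℕ∞) w :=
    (ha.smul contDiff_const).add (hb.smul contDiff_const)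
  have hdw : ∀ p x y, fderiv ℝ w p x y = fderiv ℝ a p x * y.1 + fderiv ℝ b p x * y.2 := by
    intro p x y
    have hA := (ha.differentiable (by simp) p).hasFDerivAt
    have hB := (hb.differentiable (by simp) p).hasFDerivAt
    have := ((hA.smul_const (ContinuousLinearMap.fst ℝ ℝ ℝ)).add
      (hB.smul_const (ContinuousLinearMap.snd ℝ ℝ ℝ))).fderiv
    have h2 : fderiv ℝ w p = _ := this
    rw [h2]; simp
  have hlin : ∀ (L : ℝ × ℝ →L[ℝ] ℝ) (x : ℝ × ℝ), L x = x.1 * L (1, 0) + x.2 * L (0, 1) := by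
    intro L x
    have : x = x.1 • ((1 : ℝ), (0 : ℝ)) + x.2 • ((0 : ℝ), (1 : ℝ)) := by
      ext <;> simp
    conv_lhs => rw [this]
    rw [map_add, map_smul, map_smul]; simp
  obtain ⟨θ, hθ⟩ := (convex_univ (𝕜 := ℝ) (E := ℝ × ℝ)).exists_forall_hasFDerivAt_of_fderiv_symmetric
    isOpen_univ (ω := w) (hw.differentiable (by simp)).differentiableOn (by
      intro p _ x y
      have h := hab p
      rw [pdt_eq ha, pds_eq hb] at h
      rw [hdw, hdw, hlin _ x, hlin _ y, hlin (fderiv ℝ b p) x, hlin (fderiv ℝ b p) y, h]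
      ring)
  have hθ' : ∀ p, HasFDerivAt θ (w p) p := fun p => hθ p (Set.mem_univ p)
  have hθs : ContDiff ℝ (⊤ : ℕ∞) θ := by
    rw [contDiff_infty_iff_fderiv]
    refine ⟨fun p => (hθ' p).differentiableAt, ?_⟩
    have : fderiv ℝ θ = w := funext fun p => (hθ' p).fderiv
    rw [this]; exact hw
  refine ⟨θ, hθs, fun p => ?_, fun p => ?_⟩
  · rw [pds_eq hθs, (hθ' p).fderiv]; simp [w]
  · rw [pdt_eq hθs, (hθ' p).fderiv]; simp [w]

lemma pds_smul {f : ℝ × ℝ → ℝ} {g : ℝ × ℝ → E} (hf : ContDiff ℝ (⊤ : ℕ∞) f)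
    (hg : ContDiff ℝ (⊤ : ℕ∞) g) (p : ℝ × ℝ) :
    pds (fun q => f q • g q) p = f p • pds g p + pds f p • g p :=
  ((hasS' hf p).smul (hasS' hg p)).deriv

lemma pdt_smul {f : ℝ × ℝ → ℝ} {g : ℝ × ℝ → E} (hf : ContDiff ℝ (⊤ : ℕ∞) f)
    (hg : ContDiff ℝ (⊤ : ℕ∞) g) (p : ℝ × ℝ) :
    pdt (fun q => f q • g q) p = f p • pdt g p + pdt f p • g p :=
  ((hasT' hf p).smul (hasT' hg p)).deriv

lemma pds_comb {f f' : ℝ × ℝ → ℝ} {g g' : ℝ × ℝ → E} (hf : ContDiff ℝ (⊤ : ℕ∞) f)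
    (hg : ContDiff ℝ (⊤ : ℕ∞) g) (hf' : ContDiff ℝ (⊤ : ℕ∞) f')
    (hg' : ContDiff ℝ (⊤ : ℕ∞) g') (p : ℝ × ℝ) :
    pds (fun q => f q • g q + f' q • g' q) p =
      (f p • pds g p + pds f p • g p) + (f' p • pds g' p + pds f' p • g' p) :=
  (((hasS' hf p).smul (hasS' hg p)).add ((hasS' hf' p).smul (hasS' hg' p))).deriv

lemma pdt_comb {f f' : ℝ × ℝ → ℝ} {g g' : ℝ × ℝ → E} (hf : ContDiff ℝ (⊤ : ℕ∞) f)
    (hg : ContDiff ℝ (⊤ : ℕ∞) g) (hf' : ContDiff ℝ (⊤ : ℕ∞) f')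
    (hg' : ContDiff ℝ (⊤ : ℕ∞) g') (p : ℝ × ℝ) :
    pdt (fun q => f q • g q + f' q • g' q) p =
      (f p • pdt g p + pdt f p • g p) + (f' p • pdt g' p + pdt f' p • g' p) :=
  (((hasT' hf p).smul (hasT' hg p)).add ((hasT' hf' p).smul (hasT' hg' p))).deriv

lemma smooth_lor {f g : ℝ × ℝ → V3} (hf : ContDiff ℝ (⊤ : ℕ∞) f)
    (hg : ContDiff ℝ (⊤ : ℕ∞) g) : ContDiff ℝ (⊤ : ℕ∞) (fun q => lor (f q) (g q)) := by
  have hf' := contDiff_pi.1 hf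
  have hg' := contDiff_pi.1 hg
  exact ((((hf' 0).mul (hg' 0)).neg).add ((hf' 1).mul (hg' 1))).add ((hf' 2).mul (hg' 2))

lemma hasDerivAt_lor {u v : ℝ → V3} {u' v' : V3} {x : ℝ} (hu : HasDerivAt u u' x)
    (hv : HasDerivAt v v' x) :
    HasDerivAt (fun y => lor (u y) (v y)) (lor u' (v x) + lor (u x) v') x := by
  have hu' := hasDerivAt_pi.1 hu
  have hv' := hasDerivAt_pi.1 hv
  have := ((((hu' 0).mul (hv' 0)).neg).add ((hu' 1).mul (hv' 1))).add ((hu' 2).mul (hv' 2))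
  refine this.congr_deriv ?_
  simp only [lor]; ring

lemma pds_lor {f g : ℝ × ℝ → V3} (hf : ContDiff ℝ (⊤ : ℕ∞) f)
    (hg : ContDiff ℝ (⊤ : ℕ∞) g) (p : ℝ × ℝ) :
    pds (fun q => lor (f q) (g q)) p = lor (pds f p) (g p) + lor (f p) (pds g p) :=
  (hasDerivAt_lor (hasS' hf p) (hasS' hg p)).deriv

lemma pdt_lor {f g : ℝ × ℝ → V3} (hf : ContDiff ℝ (⊤ : ℕ∞) f)
    (hg : ContDiff ℝ (⊤ : ℕ∞) g) (p : ℝ × ℝ) :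
    pdt (fun q => lor (f q) (g q)) p = lor (pdt f p) (g p) + lor (f p) (pdt g p) :=
  (hasDerivAt_lor (hasT' hf p) (hasT' hg p)).deriv

lemma pds_const (c : E) (p : ℝ × ℝ) : pds (fun _ => c) p = 0 := by simp [pds]

lemma pdt_const (c : E) (p : ℝ × ℝ) : pdt (fun _ => c) p = 0 := by simp [pdt]

lemma lor_comm (x y : V3) : lor x y = lor y x := by simp only [lor]; ring

lemma lor_add_left (x y z : V3) : lor (x + y) z = lor x z + lor y z := by
  simp only [lor, Pi.add_apply]; ring

lemma lor_smul_left (c : ℝ) (x z : V3) : lor (c • x) z = c * lor x z := by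
  simp only [lor, Pi.smul_apply, smul_eq_mul]; ring

lemma lor_add_right (x y z : V3) : lor z (x + y) = lor z x + lor z y := by
  simp only [lor, Pi.add_apply]; ring

lemma lor_smul_right (c : ℝ) (x z : V3) : lor z (c • x) = c * lor z x := by
  simp only [lor, Pi.smul_apply, smul_eq_mul]; ring

/-- Expansion of a vector in a Lorentz-orthonormal frame. -/
lemma lor_expand {T N B : V3} (hTT : lor T T = 1) (hNN : lor N N = 1) (hBB : lor B B = -1)
    (hTN : lor T N = 0) (hTB : lor T B = 0) (hNB : lor N B = 0) (x : V3) :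
    x = lor x T • T + lor x N • N - lor x B • B := by
  let P : Matrix (Fin 3) (Fin 3) ℝ := !![-T 0, T 1, T 2; -N 0, N 1, N 2; -B 0, B 1, B 2]
  let Q : Matrix (Fin 3) (Fin 3) ℝ := !![T 0, N 0, -B 0; T 1, N 1, -B 1; T 2, N 2, -B 2]
  have hPQ : P * Q = 1 := by
    simp only [lor] at *
    ext i j
    fin_cases i <;> fin_cases j <;>
      simp [P, Q, Matrix.mul_apply, Fin.sum_univ_three] <;> linarith
  have hQP : Q * P = 1 := mul_eq_one_comm.1 hPQ
  have h : (Q * P).mulVec x = x := by rw [hQP, Matrix.one_mulVec]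
  have hi := fun i => congrFun h i
  ext i
  rw [← hi i]
  fin_cases i <;>
    simp [P, Q, lor, Matrix.mulVec, dotProduct, Matrix.mul_apply, Fin.sum_univ_three] <;> ring

end Helpers

/-- For a smooth solution `α` of the vortex filament equation whose
curves `α(·,t)` are unit-speed spacelike with timelike binormal, with smooth Frenet
frame `(T,N,B)` (`⟨T,T⟩_L = ⟨N,N⟩_L = 1`, `⟨B,B⟩_L = −1`, `α_t = κB`, `Tₛ = κN`,
`Nₛ = −κT + τB`, `Bₛ = τN`, `κ > 0`), there exists a parallel normal frame
`(T,E₁,E₂)` with `⟨E₁,E₁⟩_L = 1`, `⟨E₂,E₂⟩_L = −1` and principal curvatures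
`k₁, k₂` satisfying the stated `s`- and `t`-evolution equations. -/
theorem statement17 (α T N B : ℝ × ℝ → V3) (κ τ : ℝ × ℝ → ℝ)
    (hα : ContDiff ℝ (⊤ : ℕ∞) α) (hT : ContDiff ℝ (⊤ : ℕ∞) T) (hN : ContDiff ℝ (⊤ : ℕ∞) N)
    (hB : ContDiff ℝ (⊤ : ℕ∞) B) (hκ : ContDiff ℝ (⊤ : ℕ∞) κ) (hτ : ContDiff ℝ (⊤ : ℕ∞) τ)
    (hvfe : ∀ p, pdt α p = lcross (pds α p) (pds (pds α) p))
    (hαs : ∀ p, pds α p = T p)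
    (hTT : ∀ p, lor (T p) (T p) = 1)
    (hNN : ∀ p, lor (N p) (N p) = 1)
    (hBB : ∀ p, lor (B p) (B p) = -1)
    (hαt : ∀ p, pdt α p = κ p • B p)
    (hTs : ∀ p, pds T p = κ p • N p)
    (hNs : ∀ p, pds N p = -(κ p) • T p + τ p • B p)
    (hBs : ∀ p, pds B p = τ p • N p)
    (hκpos : ∀ p, 0 < κ p) :
    ∃ E₁ E₂ : ℝ × ℝ → V3, ∃ k₁ k₂ : ℝ × ℝ → ℝ,
      ContDiff ℝ (⊤ : ℕ∞) E₁ ∧ ContDiff ℝ (⊤ : ℕ∞) E₂ ∧ ContDiff ℝ (⊤ : ℕ∞) k₁ ∧ ContDiff ℝ (⊤ : ℕ∞) k₂ ∧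
      (∀ p, lor (E₁ p) (E₁ p) = 1) ∧
      (∀ p, lor (E₂ p) (E₂ p) = -1) ∧
      (∀ p, lor (T p) (E₁ p) = 0) ∧
      (∀ p, lor (T p) (E₂ p) = 0) ∧
      (∀ p, lor (E₁ p) (E₂ p) = 0) ∧
      (∀ p, pds T p = k₁ p • E₁ p + k₂ p • E₂ p) ∧
      (∀ p, pds E₁ p = -(k₁ p) • T p) ∧
      (∀ p, pds E₂ p = k₂ p • T p) ∧
      (∀ p, pdt T p = (pds k₂ p) • E₁ p + (pds k₁ p) • E₂ p) ∧
      (∀ p, pdt E₁ p = -(pds k₂ p) • T p - ((k₁ p ^ 2 - k₂ p ^ 2) / 2) • E₂ p) ∧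
      (∀ p, pdt E₂ p = (pds k₁ p) • T p - ((k₁ p ^ 2 - k₂ p ^ 2) / 2) • E₁ p) := by
  -- orthogonality
  have hTN : ∀ p, lor (T p) (N p) = 0 := by
    intro p
    have h := pds_lor hT hT p
    rw [show (fun q => lor (T q) (T q)) = fun _ => (1 : ℝ) from funext hTT, pds_const, hTs,
      lor_smul_left, lor_smul_right, lor_comm (N p)] at h
    have := (hκpos p).ne'
    have h2 : κ p * lor (T p) (N p) = 0 := by linarith
    exact (mul_eq_zero.1 h2).resolve_left this
  have hαs' : pds α = T := funext hαs
  have hBx : ∀ p, B p = lcross (T p) (N p) := by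
    intro p
    have h := hvfe p
    rw [hαt, hαs', hTs] at h
    have hk := (hκpos p).ne'
    ext i
    have hi := congrFun h i
    apply mul_left_cancel₀ hk
    rw [show κ p * B p i = lcross (T p) (κ p • N p) i from hi]
    fin_cases i <;> simp [lcross, -mul_eq_mul_left_iff] <;> ring
  have hTB : ∀ p, lor (T p) (B p) = 0 := by
    intro p; rw [hBx]; simp [lor, lcross]; ring
  have hNB : ∀ p, lor (N p) (B p) = 0 := by
    intro p; rw [hBx]; simp [lor, lcross]; ring
  have hexp := fun p => lor_expand (hTT p) (hNN p) (hBB p) (hTN p) (hTB p) (hNB p)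
  -- time evolution of the Frenet frame
  have hTt : ∀ p, pdt T p = (κ p * τ p) • N p + pds κ p • B p := by
    intro p
    rw [← hαs', ← pds_pdt_comm hα, show pdt α = fun q => κ q • B q from funext hαt,
      pds_smul hκ hB, hBs, smul_smul]
  obtain ⟨W, hW⟩ : ∃ W : ℝ × ℝ → ℝ, W = fun p => lor (pdt B p) (N p) := ⟨_, rfl⟩
  have hWs : ContDiff ℝ (⊤ : ℕ∞) W := by
    rw [hW]; exact smooth_lor (smooth_pdt hB) hN
  have hBt : ∀ p, pdt B p = pds κ p • T p + W p • N p := by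
    intro p
    have h1 : lor (pdt B p) (T p) = pds κ p := by
      have h := pdt_lor hT hB p
      rw [show (fun q => lor (T q) (B q)) = fun _ => (0 : ℝ) from funext hTB, pdt_const, hTt,
        lor_add_left, lor_smul_left, lor_smul_left, hNB, hBB, lor_comm (T p)] at h
      linarith
    have h2 : lor (pdt B p) (B p) = 0 := by
      have h := pdt_lor hB hB p
      rw [show (fun q => lor (B q) (B q)) = fun _ => (-1 : ℝ) from funext hBB, pdt_const,
        lor_comm (B p)] at h
      linarith
    have h3 : lor (pdt B p) (N p) = W p := by rw [hW]
    rw [hexp p (pdt B p), h1, h2, h3]; simp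
  have hNt : ∀ p, pdt N p = -(κ p * τ p) • T p + W p • B p := by
    intro p
    have h1 : lor (pdt N p) (T p) = -(κ p * τ p) := by
      have h := pdt_lor hT hN p
      rw [show (fun q => lor (T q) (N q)) = fun _ => (0 : ℝ) from funext hTN, pdt_const, hTt,
        lor_add_left, lor_smul_left, lor_smul_left, hNN, lor_comm (B p), hNB, lor_comm (T p)] at h
      linarith
    have h2 : lor (pdt N p) (N p) = 0 := by
      have h := pdt_lor hN hN p
      rw [show (fun q => lor (N q) (N q)) = fun _ => (1 : ℝ) from funext hNN, pdt_const,
        lor_comm (N p)] at h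
      linarith
    have h3 : lor (pdt N p) (B p) = -W p := by
      have h := pdt_lor hN hB p
      rw [show (fun q => lor (N q) (B q)) = fun _ => (0 : ℝ) from funext hNB, pdt_const,
        lor_comm (N p)] at h
      rw [hW]; linarith
    rw [hexp p (pdt N p), h1, h2, h3]; simp
  -- compatibility
  have hcomp : ∀ p, pdt τ p = pds W p + κ p * pds κ p := by
    intro p
    have h := pds_pdt_comm hN p
    rw [show pdt N = fun q => -(κ q * τ q) • T q + W q • B q from funext hNt,
      show pds N = fun q => -(κ q) • T q + τ q • B q from funext hNs,
      pds_comb (hκ.mul hτ).neg hT hWs hB, pdt_comb hκ.neg hT hτ hB,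
      hTs, hBs, hTt, hBt] at h
    have h' := congrArg (fun v => lor v (B p)) h
    simp only [lor_add_left, lor_smul_left, hTB, hNB, hBB] at h'
    linarith
  -- the rotation angle
  obtain ⟨θ, hθ, hθs, hθt⟩ := exists_potential (a := fun p => -τ p)
    (b := fun p => -W p + -(1 / 2) * (κ p * κ p)) hτ.neg
    (hWs.neg.add (contDiff_const.mul (hκ.mul hκ))) (by
      intro p
      have e1 : pdt (fun p => -τ p) p = -pdt τ p := (hasT' hτ p).neg.deriv
      have e2 : pds (fun p => -W p + -(1 / 2) * (κ p * κ p)) p =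
          -pds W p + -(1 / 2) * (pds κ p * κ p + κ p * pds κ p) :=
        ((hasS' hWs p).neg.add (((hasS' hκ p).mul (hasS' hκ p)).const_mul _)).deriv
      rw [e1, e2, hcomp]; ring)
  have hc : ContDiff ℝ (⊤ : ℕ∞) (fun p => cosh (θ p)) := Real.contDiff_cosh.comp hθ
  have hs : ContDiff ℝ (⊤ : ℕ∞) (fun p => sinh (θ p)) := Real.contDiff_sinh.comp hθ
  have hcs : ∀ p, pds (fun p => cosh (θ p)) p = sinh (θ p) * -τ p := by
    intro p; rw [← hθs p]; exact (hasS' hθ p).cosh.deriv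
  have hss : ∀ p, pds (fun p => sinh (θ p)) p = cosh (θ p) * -τ p := by
    intro p; rw [← hθs p]; exact (hasS' hθ p).sinh.deriv
  have hct : ∀ p, pdt (fun p => cosh (θ p)) p
      = sinh (θ p) * (-W p + -(1 / 2) * (κ p * κ p)) := by
    intro p; rw [← hθt p]; exact (hasT' hθ p).cosh.deriv
  have hst : ∀ p, pdt (fun p => sinh (θ p)) p
      = cosh (θ p) * (-W p + -(1 / 2) * (κ p * κ p)) := by
    intro p; rw [← hθt p]; exact (hasT' hθ p).sinh.deriv
  have hk1s : ∀ p, pds (fun p => κ p • cosh (θ p)) p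
      = κ p * (sinh (θ p) * -τ p) + pds κ p * cosh (θ p) := by
    intro p; rw [pds_smul hκ hc, hcs]; rfl
  have hk2s : ∀ p, pds (fun p => (-κ p) • sinh (θ p)) p
      = -κ p * (cosh (θ p) * -τ p) + -pds κ p * sinh (θ p) := by
    intro p
    have e1 : pds (fun p => -κ p) p = -pds κ p := (hasS' hκ p).neg.deriv
    rw [pds_smul hκ.neg hs, hss, e1]; rfl
  have hch : ∀ p, cosh (θ p) ^ 2 = sinh (θ p) ^ 2 + 1 := fun p => Real.cosh_sq (θ p)
  refine ⟨fun p => cosh (θ p) • N p + sinh (θ p) • B p,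
    fun p => sinh (θ p) • N p + cosh (θ p) • B p,
    fun p => κ p • cosh (θ p), fun p => (-κ p) • sinh (θ p),
    (hc.smul hN).add (hs.smul hB), (hs.smul hN).add (hc.smul hB), hκ.smul hc, hκ.neg.smul hs,
    ?_, ?_, ?_, ?_, ?_, ?_, ?_, ?_, ?_, ?_, ?_⟩ <;> intro p
  · simp only [lor_add_left, lor_smul_left, lor_add_right, lor_smul_right, hNN, hBB, hNB,
      lor_comm (B p) (N p)]
    linear_combination hch p
  · simp only [lor_add_left, lor_smul_left, lor_add_right, lor_smul_right, hNN, hBB, hNB,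
      lor_comm (B p) (N p)]
    linear_combination -hch p
  · simp only [lor_add_right, lor_smul_right, hTN, hTB]; ring
  · simp only [lor_add_right, lor_smul_right, hTN, hTB]; ring
  · simp only [lor_add_left, lor_smul_left, lor_add_right, lor_smul_right, hNN, hBB, hNB,
      lor_comm (B p) (N p)]
    ring
  · rw [hTs]
    ext i
    simp only [Pi.add_apply, Pi.smul_apply, smul_eq_mul]
    linear_combination -(κ p * N p i) * hch p
  · rw [pds_comb hc hN hs hB, hcs, hss, hNs, hBs]
    ext i
    simp only [Pi.add_apply, Pi.smul_apply, smul_eq_mul]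
    ring
  · rw [pds_comb hs hN hc hB, hcs, hss, hNs, hBs]
    ext i
    simp only [Pi.add_apply, Pi.smul_apply, smul_eq_mul]
    ring
  · rw [hTt, hk1s, hk2s]
    ext i
    simp only [Pi.add_apply, Pi.smul_apply, smul_eq_mul]
    linear_combination -(κ p * τ p * N p i + pds κ p * B p i) * hch p
  · rw [pdt_comb hc hN hs hB, hct, hst, hNt, hBt,
      hk2s]
    ext i
    simp only [Pi.add_apply, Pi.sub_apply, Pi.smul_apply, smul_eq_mul]
    linear_combination (κ p ^ 2 / 2 * (sinh (θ p) * N p i + cosh (θ p) * B p i)) * hch p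
  · rw [pdt_comb hs hN hc hB, hct, hst, hNt, hBt,
      hk1s]
    ext i
    simp only [Pi.add_apply, Pi.sub_apply, Pi.smul_apply, smul_eq_mul]
    linear_combination (κ p ^ 2 / 2 * (cosh (θ p) * N p i + sinh (θ p) * B p i)) * hch p
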